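/- arXiv:1705.01916 — 3 statements merged into one kernel-verified Lean document; each statement's English description precedes it below -/
import Mathlib

section
/- Let d ≥ 1, let Λ = ∏_{i=1}^d {0, 1, …, M_i} be a finite rectangle in ℤ^d, let v : Λ → [0,1], let 0 < γ ≤ 1/(4d), and let λ ∈ [0, 1 + 4dγ]. Let X ⊆ Λ be nonempty, set z_max = max{ x_d : x ∈ X }, and assume z_max < M_d (X does not meet the top face of Λ in the d-th direction). Let ψ : Λ → ℝ vanish outside X and satisfy (Hψ)(x) = λ ψ(x) for every x ∈ X. Let δ > 0 and suppose that for every y ∈ Λ ∖ X at ℓ¹ distance 1 from X one has | Σ_{x ∈ X, |x−y|=1} ψ(x) | < δ. Then every x ∈ X satisfies |ψ(x)| ≤ (2/γ)^{z_max − x_d} · δ. -/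
noncomputable section

open scoped BigOperators

/-- ℓ¹ distance on `ℤ^d` (natural-number valued). -/
def dist1 {d : ℕ} (x y : Fin d → ℤ) : ℕ := ∑ i, (x i - y i).natAbs

lemma dist1_comm {d : ℕ} (x y : Fin d → ℤ) : dist1 x y = dist1 y x :=
  Finset.sum_congr rfl fun i _ => by rw [← Int.natAbs_neg, neg_sub]

/-- ℓ¹ diameter of a finite subset of `ℤ^d`. -/
def diam1 {d : ℕ} (Λ : Finset (Fin d → ℤ)) : ℕ := (Λ ×ˢ Λ).sup fun p => dist1 p.1 p.2

/-- `Λ` is a (possibly empty) rectangle: a product of integer intervals. -/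
def IsRect {d : ℕ} (Λ : Finset (Fin d → ℤ)) : Prop := ∃ a b : Fin d → ℤ, Λ = Finset.Icc a b

/-- Entry of the Anderson Hamiltonian `H = H₀ - γ J` with potential `v`. -/
def hamEntry (d : ℕ) (γ : ℝ) (v : (Fin d → ℤ) → ℝ) (x y : Fin d → ℤ) : ℝ :=
  (if x = y then 2*d*γ + v x else 0) - γ * (if dist1 x y = 1 then 1 else 0)

/-- The Anderson Hamiltonian restricted to a finite set `X ⊂ ℤ^d`. -/
def hamOn (d : ℕ) (γ : ℝ) (v : (Fin d → ℤ) → ℝ) (X : Finset (Fin d → ℤ)) :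
    Matrix X X ℝ := Matrix.of fun x y => hamEntry d γ v x y

lemma hamOn_isHermitian (d : ℕ) (γ : ℝ) (v : (Fin d → ℤ) → ℝ) (X : Finset (Fin d → ℤ)) :
    (hamOn d γ v X).IsHermitian := by
  ext x y
  simp only [Matrix.conjTranspose_apply, hamOn, Matrix.of_apply, hamEntry, star_trivial]
  rw [dist1_comm]
  by_cases h : (y : Fin d → ℤ) = (x : Fin d → ℤ)
  · rw [if_pos h, if_pos h.symm, h]
  · rw [if_neg h, if_neg (show ¬((x : Fin d → ℤ) = (y : Fin d → ℤ)) from fun hh => h hh.symm)]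

open scoped Classical in
/-- Number of eigenvalues (with multiplicity) of a Hermitian matrix in `[a,b]`. -/
def countEigIn {n : Type*} [Fintype n] [DecidableEq n] {M : Matrix n n ℝ}
    (hM : M.IsHermitian) (a b : ℝ) : ℕ :=
  (Finset.univ.filter fun i => hM.eigenvalues i ∈ Set.Icc a b).card

/-- Expectation with respect to the uniform measure on a finite configuration space. -/
def expect {Ω : Type*} [Fintype Ω] (f : Ω → ℝ) : ℝ := (∑ ω, f ω) / Fintype.card Ω

open scoped Classical in
/-- Probability of an event with respect to the uniform measure on a finite space. -/
def prob {Ω : Type*} [Fintype Ω] (A : Ω → Prop) : ℝ :=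
  ((Finset.univ.filter A).card : ℝ) / Fintype.card Ω

/-- The random potential determined by a configuration `ω : Λ → Fin N`:
the value at `x ∈ Λ` is `ω x / (N-1) ∈ {0, 1/(N-1), …, 1}`. -/
def potential {d : ℕ} (N : ℕ) (Λ : Finset (Fin d → ℤ)) (ω : Λ → Fin N) :
    (Fin d → ℤ) → ℝ := fun x => if h : x ∈ Λ then (ω ⟨x, h⟩ : ℕ) / ((N : ℝ) - 1) else 0

/-!
Let `x ∈ X` and `y = x + e_d`. Every neighbour of `y` other than `x` lies strictly above `x`, so
`|ψ x|` is at most the modulus of the sum of `ψ` over the neighbours of `y`, plus `2d - 1` times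
any bound for `ψ` on the layers above `x`. If `y ∉ X`, this neighbour sum is the influence on `y`,
which is small. If `y ∈ X`, the eigenvalue equation at `y` makes it a multiple of `ψ y`, and `y`
also lies above `x`. Hence each layer is controlled by the layers above it, and one descends from
the top layer, above which `ψ` vanishes.
-/

section Lattice

variable {d : ℕ} {x y w : Fin d → ℤ}

lemma dist1_add_single (y : Fin d → ℤ) (i : Fin d) (n : ℤ) :
    dist1 (y + Pi.single i n) y = n.natAbs := by
  simp [dist1, Pi.single_apply, apply_ite Int.natAbs]

lemma exists_eq_add_single_of_dist1_eq_one (h : dist1 x y = 1) :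
    ∃ (i : Fin d) (u : ℤˣ), x = y + Pi.single i (u : ℤ) := by
  obtain ⟨i, -, hi⟩ := Finset.exists_ne_zero_of_sum_ne_zero (h.trans_ne one_ne_zero)
  rw [dist1, ← Finset.add_sum_erase _ _ (Finset.mem_univ i)] at h
  have h_unit : IsUnit (x i - y i) := Int.isUnit_iff_natAbs_eq.mpr (by lia)
  have h_off : ∀ j ≠ i, x j = y j := fun j hj => by
    have h_rest : ∑ k ∈ Finset.univ.erase i, (x k - y k).natAbs = 0 := by lia
    have := Finset.sum_eq_zero_iff.mp h_rest j (by simpa using hj)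
    lia
  refine ⟨i, h_unit.unit, funext fun j => ?_⟩
  rcases eq_or_ne j i with rfl | hj
  · simp
  · simp [hj, h_off j hj]

lemma lt_apply_of_dist1_add_single_eq_one {i : Fin d} (h : dist1 w (x + Pi.single i 1) = 1)
    (hwx : w ≠ x) : x i < w i := by
  obtain ⟨j, u, rfl⟩ := exists_eq_add_single_of_dist1_eq_one h
  rcases eq_or_ne i j with rfl | hij
  · rcases Int.units_eq_one_or u with rfl | rfl
    · simp
    · simp [add_assoc, ← Pi.single_add] at hwx
  · simp [hij]

lemma add_single_one_mem_Icc {a b : Fin d → ℤ} {i : Fin d} (hx : x ∈ Finset.Icc a b)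
    (hi : x i < b i) : x + Pi.single i 1 ∈ Finset.Icc a b := by
  rw [Finset.mem_Icc] at hx ⊢
  refine ⟨hx.1.trans (le_add_of_nonneg_right (by simp)), fun j => ?_⟩
  rcases eq_or_ne j i with rfl | hj
  · simpa using hi
  · simpa [hj] using hx.2 j

end Lattice

section NeighborSum

/-- The sites of `Λ` adjacent to `y`, as elements of the index type of `hamOn`. The site `y` itself
need not lie in `Λ`. -/
def nearestNeighbors {d : ℕ} (Λ : Finset (Fin d → ℤ)) (y : Fin d → ℤ) : Finset Λ :=
  Finset.univ.filter fun x => dist1 (x : Fin d → ℤ) y = 1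

variable {d : ℕ} {Λ : Finset (Fin d → ℤ)} {y : Fin d → ℤ}

lemma mem_nearestNeighbors {x : Λ} :
    x ∈ nearestNeighbors Λ y ↔ dist1 (x : Fin d → ℤ) y = 1 := by
  simp [nearestNeighbors]

lemma card_nearestNeighbors_le (Λ : Finset (Fin d → ℤ)) (y : Fin d → ℤ) :
    (nearestNeighbors Λ y).card ≤ 2 * d := by
  let shift : Fin d × ℤˣ → Fin d → ℤ := fun p => y + Pi.single p.1 (p.2 : ℤ)
  have h_sub : (nearestNeighbors Λ y).map (Function.Embedding.subtype _) ⊆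
      Finset.univ.image shift := fun w hw => by
    obtain ⟨x, hx, rfl⟩ := Finset.mem_map.mp hw
    obtain ⟨i, u, hxi⟩ := exists_eq_add_single_of_dist1_eq_one (mem_nearestNeighbors.mp hx)
    exact Finset.mem_image.mpr ⟨(i, u), Finset.mem_univ _, hxi.symm⟩
  calc (nearestNeighbors Λ y).card
      = ((nearestNeighbors Λ y).map (Function.Embedding.subtype _)).card :=
        (Finset.card_map _).symm
    _ ≤ (Finset.univ.image shift).card := Finset.card_le_card h_sub
    _ ≤ Fintype.card (Fin d × ℤˣ) := Finset.card_image_le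
    _ = 2 * d := by simp [mul_comm]

lemma abs_le_abs_sum_nearestNeighbors_add {ψ : Λ → ℝ} {x : Λ} {B : ℝ}
    (hx : x ∈ nearestNeighbors Λ y) (hB : 0 ≤ B)
    (hψ : ∀ w ∈ nearestNeighbors Λ y, w ≠ x → |ψ w| ≤ B) :
    |ψ x| ≤ |∑ w ∈ nearestNeighbors Λ y, ψ w| + (2 * d - 1) * B := by
  set N := nearestNeighbors Λ y
  have h_card : ((N.erase x).card : ℝ) ≤ 2 * d - 1 := by
    rw [le_sub_iff_add_le]
    exact_mod_cast (Finset.card_erase_add_one hx).trans_le (card_nearestNeighbors_le Λ y)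
  have h_rest : |∑ w ∈ N.erase x, ψ w| ≤ (2 * d - 1) * B :=
    calc |∑ w ∈ N.erase x, ψ w|
        ≤ ∑ w ∈ N.erase x, |ψ w| := Finset.abs_sum_le_sum_abs _ _
      _ ≤ (N.erase x).card • B := Finset.sum_le_card_nsmul _ _ _ fun w hw =>
          hψ w (Finset.mem_of_mem_erase hw) (Finset.ne_of_mem_erase hw)
      _ ≤ (2 * d - 1) * B := by rw [nsmul_eq_mul]; gcongr
  calc |ψ x| = |∑ w ∈ N, ψ w - ∑ w ∈ N.erase x, ψ w| := by
        rw [← Finset.add_sum_erase N ψ hx, add_sub_cancel_right]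
    _ ≤ |∑ w ∈ N, ψ w| + |∑ w ∈ N.erase x, ψ w| := abs_sub _ _
    _ ≤ |∑ w ∈ N, ψ w| + (2 * d - 1) * B := by gcongr

lemma sum_nearestNeighbors_eq_sum_filter_mem {X : Finset (Fin d → ℤ)} {ψ : Λ → ℝ}
    (hψ : ∀ x : Λ, (x : Fin d → ℤ) ∉ X → ψ x = 0) (y : Fin d → ℤ) :
    ∑ x ∈ nearestNeighbors Λ y, ψ x =
      ∑ x ∈ Finset.univ.filter
        (fun x : Λ => (x : Fin d → ℤ) ∈ X ∧ dist1 (x : Fin d → ℤ) y = 1), ψ x := by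
  rw [nearestNeighbors, Finset.sum_filter, Finset.sum_filter]
  refine Finset.sum_congr rfl fun x _ => ?_
  by_cases hx : (x : Fin d → ℤ) ∈ X <;> simp [hx, hψ]

lemma hamOn_mulVec (γ : ℝ) (v : (Fin d → ℤ) → ℝ) (ψ : Λ → ℝ) (y : Λ) :
    (hamOn d γ v Λ).mulVec ψ y =
      (2 * d * γ + v y) * ψ y - γ * ∑ x ∈ nearestNeighbors Λ y, ψ x := by
  simp [Matrix.mulVec, dotProduct, hamOn, hamEntry, sub_mul, Finset.sum_sub_distrib, ite_mul,
    nearestNeighbors, Finset.sum_filter, Finset.mul_sum, dist1_comm (y : Fin d → ℤ)]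

lemma mul_sum_nearestNeighbors_of_mulVec_eq {γ lam : ℝ} {v : (Fin d → ℤ) → ℝ} {ψ : Λ → ℝ}
    {y : Λ} (h : (hamOn d γ v Λ).mulVec ψ y = lam * ψ y) :
    γ * ∑ x ∈ nearestNeighbors Λ y, ψ x = (2 * d * γ + v y - lam) * ψ y := by
  rw [hamOn_mulVec] at h
  linarith

end NeighborSum

lemma le_zpow_mul_of_layer_step {α : Type*} {height : α → ℤ} {f : α → ℝ} {m : ℤ} {c K δ : ℝ}
    (hδ : 0 ≤ δ) (hc : 0 ≤ c) (hcK : c + 1 ≤ K) (h_top : ∀ x, m < height x → f x ≤ 0)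
    (h_step : ∀ x B, 0 ≤ B → (∀ w, height x < height w → f w ≤ B) →
      f x ≤ max (δ + c * B) (K * B))
    {x : α} (hx : height x ≤ m) : f x ≤ K ^ (m - height x) * δ := by
  have hK : 1 ≤ K := by linarith
  have h_pow : ∀ (n : ℕ) (x : α), m ≤ height x + n → f x ≤ K ^ n * δ := by
    intro n
    induction n with
    | zero =>
      intro x hx
      simpa [hδ] using h_step x 0 le_rfl fun w hw => h_top w (by lia)
    | succ n ih =>
      intro x hx
      have hδB : δ ≤ K ^ n * δ := le_mul_of_one_le_left hδ (one_le_pow₀ hK)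
      have h_first : δ + c * (K ^ n * δ) ≤ K * (K ^ n * δ) :=
        calc δ + c * (K ^ n * δ) ≤ K ^ n * δ + c * (K ^ n * δ) := by gcongr
          _ = (c + 1) * (K ^ n * δ) := by ring
          _ ≤ K * (K ^ n * δ) := mul_le_mul_of_nonneg_right hcK (hδ.trans hδB)
      calc f x ≤ max (δ + c * (K ^ n * δ)) (K * (K ^ n * δ)) :=
            h_step x _ (hδ.trans hδB) fun w hw => ih w (by lia)
        _ = K * (K ^ n * δ) := max_eq_right h_first
        _ = K ^ (n + 1) * δ := by ring
  obtain ⟨n, hn⟩ := Int.eq_ofNat_of_zero_le (sub_nonneg.mpr hx)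
  rw [hn, zpow_natCast]
  exact h_pow n x (by lia)

section Decay

variable {d : ℕ} {Λ X : Finset (Fin d → ℤ)} {i : Fin d} {v : (Fin d → ℤ) → ℝ}
  {γ lam K δ : ℝ} {ψ : Λ → ℝ}

lemma abs_le_max_of_forall_above_le (hγ : 0 < γ)
    (hK : ∀ y ∈ X, |2 * d * γ + v y - lam| ≤ (K - (2 * d - 1)) * γ)
    (hX : ∀ x ∈ X, x + Pi.single i 1 ∈ Λ)
    (hψ : ∀ x : Λ, (x : Fin d → ℤ) ∈ X → (hamOn d γ v Λ).mulVec ψ x = lam * ψ x)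
    (h_influence : ∀ y ∈ Λ, y ∉ X → (∃ x ∈ X, dist1 x y = 1) →
      |∑ x ∈ nearestNeighbors Λ y, ψ x| ≤ δ)
    {x : Λ} (hx : (x : Fin d → ℤ) ∈ X) {B : ℝ} (hB : 0 ≤ B)
    (h_above : ∀ w : Λ, (x : Fin d → ℤ) i < (w : Fin d → ℤ) i → |ψ w| ≤ B) :
    |ψ x| ≤ max (δ + (2 * d - 1) * B) (K * B) := by
  let y : Λ := ⟨(x : Fin d → ℤ) + Pi.single i 1, hX x hx⟩
  have hxy : dist1 (x : Fin d → ℤ) y = 1 := (dist1_comm _ _).trans (dist1_add_single _ i 1)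
  have hψx : |ψ x| ≤ |∑ w ∈ nearestNeighbors Λ y, ψ w| + (2 * d - 1) * B :=
    abs_le_abs_sum_nearestNeighbors_add (mem_nearestNeighbors.mpr hxy) hB fun w hw hwx =>
      h_above w (lt_apply_of_dist1_add_single_eq_one (mem_nearestNeighbors.mp hw)
        (Subtype.coe_ne_coe.mpr hwx))
  by_cases hy : (y : Fin d → ℤ) ∈ X
  · have h_sum : |∑ w ∈ nearestNeighbors Λ y, ψ w| ≤ (K - (2 * d - 1)) * B := by
      refine le_of_mul_le_mul_left ?_ hγ
      calc γ * |∑ w ∈ nearestNeighbors Λ y, ψ w|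
          = |γ * ∑ w ∈ nearestNeighbors Λ y, ψ w| := by rw [abs_mul, abs_of_pos hγ]
        _ = |2 * d * γ + v y - lam| * |ψ y| := by
            rw [mul_sum_nearestNeighbors_of_mulVec_eq (hψ y hy), abs_mul]
        _ ≤ ((K - (2 * d - 1)) * γ) * B :=
            mul_le_mul (hK y hy) (h_above y (by simp [y])) (abs_nonneg _)
              ((abs_nonneg _).trans (hK y hy))
        _ = γ * ((K - (2 * d - 1)) * B) := by ring
    exact le_max_of_le_right (by linarith)
  · have h_sum := h_influence y y.2 hy ⟨x, hx, hxy⟩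
    exact le_max_of_le_left (by linarith)

theorem layer_decay_general {m : ℤ} (hγ : 0 < γ) (hdK : 2 * d ≤ K)
    (hK : ∀ y ∈ X, |2 * d * γ + v y - lam| ≤ (K - (2 * d - 1)) * γ)
    (hX : ∀ x ∈ X, x + Pi.single i 1 ∈ Λ) (hm : ∀ x ∈ X, x i ≤ m)
    (hψ0 : ∀ x : Λ, (x : Fin d → ℤ) ∉ X → ψ x = 0)
    (hψ : ∀ x : Λ, (x : Fin d → ℤ) ∈ X → (hamOn d γ v Λ).mulVec ψ x = lam * ψ x)
    (hδ : 0 ≤ δ)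
    (h_influence : ∀ y ∈ Λ, y ∉ X → (∃ x ∈ X, dist1 x y = 1) →
      |∑ x ∈ nearestNeighbors Λ y, ψ x| ≤ δ)
    {x : Λ} (hx : (x : Fin d → ℤ) ∈ X) :
    |ψ x| ≤ K ^ (m - (x : Fin d → ℤ) i) * δ := by
  have hd : (1 : ℝ) ≤ d := by exact_mod_cast i.pos
  refine le_zpow_mul_of_layer_step (height := fun x : Λ => (x : Fin d → ℤ) i)
    (f := fun x => |ψ x|) (c := 2 * d - 1) hδ (by linarith) (by linarith) ?_ ?_ (hm x hx)
  · intro w hw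
    simp [hψ0 w fun hwX => (hm w hwX).not_gt hw]
  · intro w B hB h_above
    by_cases hw : (w : Fin d → ℤ) ∈ X
    · exact abs_le_max_of_forall_above_le hγ hK hX hψ h_influence hw hB h_above
    · have hKB : 0 ≤ K * B := mul_nonneg (by linarith) hB
      simp [hψ0 w hw, hKB]

lemma abs_diag_sub_le {t : ℝ} (hγ0 : 0 < γ) (hγ : 4 * d * γ ≤ 1)
    (ht : t ∈ Set.Icc 0 1) (hlam : lam ∈ Set.Icc 0 (1 + 4 * d * γ)) :
    |2 * d * γ + t - lam| ≤ (2 / γ - (2 * d - 1)) * γ := by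
  have h_rhs : (2 / γ - (2 * d - 1)) * γ = 2 - (2 * d - 1) * γ := by field_simp
  rw [h_rhs, abs_le]
  constructor <;> linarith [ht.1, ht.2, hlam.1, hlam.2]

end Decay

/-- **Layer-by-layer decay estimate** (key step in the proof of Lemma 3.1).
Let `Λ = ∏_i {0,…,M_i}`, `0 < γ ≤ 1/(4d)`, `λ ∈ [0,1+4dγ]`, and let `X ⊆ Λ` avoid the
top face in the `d`-th direction, with `z_max = max_{x ∈ X} x_d`.  If `ψ` vanishes
outside `X`, satisfies `(Hψ)(x) = λψ(x)` on `X`, and every site `y ∈ Λ∖X` adjacent to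
`X` has influence `< δ`, then `|ψ(x)| ≤ (2/γ)^{z_max - x_d} δ` for all `x ∈ X`. -/
theorem layer_decay (d : ℕ) (hd : 1 ≤ d) (M : Fin d → ℤ) (hM : ∀ i, 0 ≤ M i)
    (v : (Fin d → ℤ) → ℝ)
    (hv : ∀ x ∈ Finset.Icc (0 : Fin d → ℤ) M, v x ∈ Set.Icc (0:ℝ) 1)
    (γ : ℝ) (hγ0 : 0 < γ) (hγ : γ ≤ 1/(4*d))
    (lam : ℝ) (hlam : lam ∈ Set.Icc (0:ℝ) (1 + 4*d*γ))
    (X : Finset (Fin d → ℤ)) (hXne : X.Nonempty)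
    (hXΛ : X ⊆ Finset.Icc (0 : Fin d → ℤ) M)
    (i₀ : Fin d) (hi₀ : (i₀ : ℕ) = d - 1)
    (zmax : ℤ) (hzmax : zmax = X.sup' hXne (fun x => x i₀)) (htop : zmax < M i₀)
    (ψ : ↥(Finset.Icc (0 : Fin d → ℤ) M) → ℝ)
    (hψ0 : ∀ x : ↥(Finset.Icc (0 : Fin d → ℤ) M), (x : Fin d → ℤ) ∉ X → ψ x = 0)
    (hψeig : ∀ x : ↥(Finset.Icc (0 : Fin d → ℤ) M), (x : Fin d → ℤ) ∈ X →
      (hamOn d γ v (Finset.Icc (0 : Fin d → ℤ) M)).mulVec ψ x = lam * ψ x)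
    (δ : ℝ) (hδ : 0 < δ)
    (hinf : ∀ y ∈ Finset.Icc (0 : Fin d → ℤ) M, y ∉ X → (∃ x ∈ X, dist1 x y = 1) →
      |∑ x ∈ Finset.univ.filter
          (fun x : ↥(Finset.Icc (0 : Fin d → ℤ) M) =>
            (x : Fin d → ℤ) ∈ X ∧ dist1 (x : Fin d → ℤ) y = 1), ψ x| < δ) :
    ∀ x : ↥(Finset.Icc (0 : Fin d → ℤ) M), (x : Fin d → ℤ) ∈ X →
      |ψ x| ≤ (2/γ) ^ (zmax - (x : Fin d → ℤ) i₀) * δ := by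
  have hγd : 4 * d * γ ≤ 1 := mul_comm γ _ ▸ mul_le_of_le_div₀ zero_le_one (by positivity) hγ
  have hdK : 2 * d ≤ 2 / γ := by rw [le_div_iff₀ hγ0]; linarith
  have h_diag : ∀ y ∈ X, |2 * d * γ + v y - lam| ≤ (2 / γ - (2 * d - 1)) * γ := fun y hy =>
    abs_diag_sub_le hγ0 hγd (hv y (hXΛ hy)) hlam
  have hm : ∀ x ∈ X, x i₀ ≤ zmax := fun x hx => hzmax ▸ Finset.le_sup' (fun x => x i₀) hx
  have h_shift : ∀ x ∈ X, x + Pi.single i₀ 1 ∈ Finset.Icc 0 M := fun x hx =>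
    add_single_one_mem_Icc (hXΛ hx) ((hm x hx).trans_lt htop)
  have h_influence : ∀ y ∈ Finset.Icc 0 M, y ∉ X → (∃ x ∈ X, dist1 x y = 1) →
      |∑ x ∈ nearestNeighbors (Finset.Icc 0 M) y, ψ x| ≤ δ := fun y hyΛ hyX hy =>
    sum_nearestNeighbors_eq_sum_filter_mem hψ0 y ▸ (hinf y hyΛ hyX hy).le
  exact fun x hx => layer_decay_general hγ0 hdK h_diag h_shift hm hψ0 hψeig hδ.le h_influence hx
end
end

section
/- For every integer d ≥ 1 there is a constant c_d > 0, depending only on d, such that for all y, z ∈ ℤ^d: Σ_{x ∈ ℤ^d} ( max( diam({x, y, z}), 1 ) )^{−(d+1)} ≤ c_d · ( max( |y − z|, 1 ) )^{−1}, where |·| is the ℓ¹ norm on ℤ^d and diam is the ℓ¹ diameter of a finite set. -/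
noncomputable section

open scoped BigOperators

/-- ℓ¹ diameter of the three-point set `{x, y, z}`. -/
def diam3 {d : ℕ} (x y z : Fin d → ℤ) : ℕ :=
  max (dist1 x y) (max (dist1 x z) (dist1 y z))

/-!
Compare `ℓ¹` with the sup norm: with `R = max(|y - z|, 1)`, the diameter of `{x, y, z}` (or `1`, if
larger) is at least `max(R, ‖x - y‖)`, so after a translation it suffices to sum
`max(R, ‖x‖) ^ r` over `ℤ^d`, for an exponent `r < -d`. Rounding `x / R` down coordinatewise sends
exactly `R ^ d` points to each `q` in `ℤ^d`, and on them `max(R, ‖x‖)` is at least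
`(R / 2) * max(1, ‖q‖)`. The sum is therefore at most `R ^ d * (R / 2) ^ r` times the convergent
series `∑ max(1, ‖q‖) ^ r`, that is, at most a constant times `R ^ (d + r)`.
-/

open Finset in
lemma hasSum_comp_fst {α β M : Type*} [Fintype β] [AddCommMonoid M] [TopologicalSpace M]
    [ContinuousAdd M] {f : α → M} {a : M} (hf : HasSum f a) :
    HasSum (fun p : α × β ↦ f p.1) (Fintype.card β • a) := by
  classical
  have hfiber (b : β) : HasSum (fun p : α × β ↦ if p.2 = b then f p.1 else 0) a := by
    refine ((Prod.mk_left_injective b).hasSum_iff fun p hp ↦ if_neg ?_).1 ?_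
    · rintro rfl
      exact hp ⟨p.1, rfl⟩
    · simpa [Function.comp_def] using hf
  simpa using hasSum_sum (s := univ) fun b _ ↦ hfiber b

section IntLattice

variable {ι : Type*} [Fintype ι] {r : ℝ}

lemma summable_norm_rpow_pi_int (hr : r < -Fintype.card ι) :
    Summable fun x : ι → ℤ ↦ ‖x‖ ^ r := by
  let b := (Pi.basisFun ℝ ι).restrictScalars ℤ
  have hnorm (x : ι → ℤ) : ‖b.equivFun.symm x‖ = ‖x‖ := by
    have hcoe : (b.equivFun.symm x : ι → ℝ) = fun i ↦ (x i : ℝ) := by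
      classical
      ext i
      simp [b, Module.Basis.equivFun_symm_apply, Pi.single_apply]
    rw [Submodule.coe_norm, hcoe]
    rfl
  have hlattice := ZLattice.summable_norm_rpow _ r (by rwa [Module.finrank_eq_card_basis b])
  exact (b.equivFun.symm.toEquiv.summable_iff.2 hlattice).congr fun x ↦ by simp [← hnorm]

lemma summable_max_norm_rpow_pi_int (hr : r < -Fintype.card ι) (a : ℝ) :
    Summable fun x : ι → ℤ ↦ max a ‖x‖ ^ r := by
  refine (summable_norm_rpow_pi_int hr).of_norm_bounded_eventually ?_
  filter_upwards [(Set.finite_singleton (0 : ι → ℤ)).compl_mem_cofinite] with x hx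
  have hr0 : r ≤ 0 := hr.le.trans (by simp)
  rw [Real.norm_of_nonneg (Real.rpow_nonneg (le_max_of_le_right (norm_nonneg x)) r)]
  exact Real.rpow_le_rpow_of_nonpos (norm_pos_iff.2 hx) (le_max_right _ _) hr0

variable (R : ℕ) [NeZero R]

/-- Coordinatewise division with remainder by `R`: the identification of `ℤ^ι` with the product of
the coarse lattice of quotients and the box `{0, …, R - 1}^ι` of remainders. -/
def piDivModEquiv (ι : Type*) : (ι → ℤ) ≃ (ι → ℤ) × (ι → Fin R) :=
  (Equiv.piCongrRight fun _ ↦ Int.divModEquiv R).trans (Equiv.arrowProdEquivProdArrow ι _ _)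

lemma natCast_mul_norm_ediv_le (k : ℤ) : R * ‖k / R‖ ≤ ‖k‖ + R := by
  have hrem : ‖k % R‖ ≤ R := by
    have hR : (R : ℤ) ≠ 0 := mod_cast NeZero.ne R
    rw [Int.norm_eq_abs, abs_of_nonneg (by exact_mod_cast k.emod_nonneg hR)]
    exact_mod_cast (k.emod_lt_of_pos (by positivity)).le
  calc (R : ℝ) * ‖k / R‖ = ‖k - k % R‖ := by
        rw [← Int.norm_natCast R, ← norm_mul, eq_sub_of_add_eq (Int.mul_ediv_add_emod k R)]
    _ ≤ ‖k‖ + R := (norm_sub_le _ _).trans (by gcongr)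

lemma mul_max_one_norm_piDivModEquiv_fst_le (x : ι → ℤ) :
    R / 2 * max 1 ‖(piDivModEquiv R ι x).1‖ ≤ max (R : ℝ) ‖x‖ := by
  have hR : (0 : ℝ) < R := mod_cast NeZero.pos R
  have hquot : R * ‖(piDivModEquiv R ι x).1‖ ≤ ‖x‖ + R := by
    rw [← le_div_iff₀' hR, pi_norm_le_iff_of_nonneg (by positivity)]
    intro i
    rw [le_div_iff₀' hR]
    exact (natCast_mul_norm_ediv_le R (x i)).trans (by gcongr; exact norm_le_pi_norm x i)
  rw [mul_max_of_nonneg _ _ (by positivity)]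
  exact max_le (by linarith [le_max_left (R : ℝ) ‖x‖])
    (by linarith [le_max_left (R : ℝ) ‖x‖, le_max_right (R : ℝ) ‖x‖])

lemma tsum_max_norm_rpow_pi_int_le (hr : r < -Fintype.card ι) :
    ∑' x : ι → ℤ, max (R : ℝ) ‖x‖ ^ r ≤
      R ^ Fintype.card ι * (R / 2 : ℝ) ^ r * ∑' q : ι → ℤ, max 1 ‖q‖ ^ r := by
  classical
  have hR : (0 : ℝ) < R := mod_cast NeZero.pos R
  have hr0 : r ≤ 0 := hr.le.trans (by simp)
  have hcoarse := (piDivModEquiv R ι).hasSum_iff.2 <| hasSum_comp_fst (β := ι → Fin R) <|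
    (summable_max_norm_rpow_pi_int hr 1).hasSum.mul_left ((R / 2 : ℝ) ^ r)
  refine (hasSum_le (fun x ↦ ?_) (summable_max_norm_rpow_pi_int hr R).hasSum hcoarse).trans_eq ?_
  · rw [Function.comp_apply, ← Real.mul_rpow (by positivity) (by positivity)]
    exact Real.rpow_le_rpow_of_nonpos (by positivity)
      (mul_max_one_norm_piDivModEquiv_fst_le R x) hr0
  · simp [mul_assoc]

end IntLattice

lemma norm_sub_le_dist1 {d : ℕ} (x y : Fin d → ℤ) : ‖x - y‖ ≤ dist1 x y := by
  refine (pi_norm_le_iff_of_nonneg (by positivity)).2 fun i ↦ ?_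
  have hcoord : (x i - y i).natAbs ≤ dist1 x y :=
    Finset.single_le_sum (f := fun i ↦ (x i - y i).natAbs) (by simp) (Finset.mem_univ i)
  rw [Pi.sub_apply, Int.norm_eq_abs, ← Int.cast_abs, ← Nat.cast_natAbs]
  exact_mod_cast hcoord

lemma max_dist1_norm_sub_le_max_diam3 {d : ℕ} (x y z : Fin d → ℤ) :
    max ((max (dist1 y z) 1 : ℕ) : ℝ) ‖x - y‖ ≤ (max (diam3 x y z) 1 : ℕ) := by
  have hyz : dist1 y z ≤ diam3 x y z := (le_max_right _ _).trans (le_max_right _ _)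
  have hxy : dist1 x y ≤ max (diam3 x y z) 1 := (le_max_left _ _).trans (le_max_left _ _)
  exact max_le (by gcongr) ((norm_sub_le_dist1 x y).trans (by exact_mod_cast hxy))

theorem three_point_sum_bound_general {d : ℕ} {s : ℝ} (hs : d < s) :
    ∃ c : ℝ, 0 < c ∧ ∀ y z : Fin d → ℤ,
      Summable (fun x : Fin d → ℤ ↦ ((max (diam3 x y z) 1 : ℕ) : ℝ) ^ (-s)) ∧
      ∑' x : Fin d → ℤ, ((max (diam3 x y z) 1 : ℕ) : ℝ) ^ (-s)
        ≤ c * ((max (dist1 y z) 1 : ℕ) : ℝ) ^ (d - s) := by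
  have hr : -s < -Fintype.card (Fin d) := by simpa using hs
  have hs0 : -s ≤ 0 := by linarith [d.cast_nonneg (α := ℝ)]
  set S := ∑' q : Fin d → ℤ, max 1 ‖q‖ ^ (-s)
  have hS : 0 < S :=
    (summable_max_norm_rpow_pi_int hr 1).tsum_pos (fun _ ↦ by positivity) 0 (by positivity)
  refine ⟨2 ^ s * S, by positivity, fun y z ↦ ?_⟩
  set R : ℕ := max (dist1 y z) 1
  have : NeZero R := ⟨by omega⟩
  have hR : (0 : ℝ) < R := mod_cast NeZero.pos R
  have hle (x : Fin d → ℤ) :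
      ((max (diam3 x y z) 1 : ℕ) : ℝ) ^ (-s) ≤ max (R : ℝ) ‖x - y‖ ^ (-s) :=
    Real.rpow_le_rpow_of_nonpos (by positivity) (max_dist1_norm_sub_le_max_diam3 x y z) hs0
  have htranslate := (Equiv.subRight y).summable_iff.2 (summable_max_norm_rpow_pi_int hr R)
  have hsum := htranslate.of_nonneg_of_le (fun _ ↦ by positivity) hle
  refine ⟨hsum, ?_⟩
  calc ∑' x : Fin d → ℤ, ((max (diam3 x y z) 1 : ℕ) : ℝ) ^ (-s)
      ≤ ∑' x : Fin d → ℤ, max (R : ℝ) ‖x - y‖ ^ (-s) := hsum.tsum_le_tsum hle htranslate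
    _ = ∑' x : Fin d → ℤ, max (R : ℝ) ‖x‖ ^ (-s) :=
        (Equiv.subRight y).tsum_eq fun x ↦ max (R : ℝ) ‖x‖ ^ (-s)
    _ ≤ R ^ d * (R / 2 : ℝ) ^ (-s) * S := by simpa using tsum_max_norm_rpow_pi_int_le R hr
    _ = 2 ^ s * S * (R : ℝ) ^ (d - s) := by
        rw [Real.div_rpow hR.le zero_le_two, Real.rpow_neg zero_le_two, div_inv_eq_mul,
          sub_eq_add_neg, Real.rpow_add hR, Real.rpow_natCast]
        ring

/-- **Summation lemma** (inequality (4.22) in the text): for every `d ≥ 1` there is a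
constant `c_d > 0` depending only on `d` such that for all `y, z ∈ ℤ^d`,
`∑_x (max(diam{x,y,z},1))^{-(d+1)} ≤ c_d (max(|y-z|,1))^{-1}`. -/
theorem three_point_sum_bound (d : ℕ) (hd : 1 ≤ d) :
    ∃ c : ℝ, 0 < c ∧ ∀ y z : Fin d → ℤ,
      Summable (fun x : Fin d → ℤ =>
        ((max (diam3 x y z) 1 : ℕ) : ℝ) ^ (-((d : ℤ) + 1))) ∧
      ∑' x : Fin d → ℤ, ((max (diam3 x y z) 1 : ℕ) : ℝ) ^ (-((d : ℤ) + 1))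
        ≤ c * (((max (dist1 y z) 1 : ℕ) : ℝ))⁻¹ := by
  obtain ⟨c, hc, hbound⟩ := three_point_sum_bound_general (lt_add_one (d : ℝ))
  exact ⟨c, hc, fun y z ↦ by simpa [← Real.rpow_intCast, Real.rpow_neg_one] using hbound y z⟩
end
end

section
/- There exists ε₀ ∈ (0,1), depending only on the dimension d ≥ 1, such that the following holds. Let Λ ⊂ ℤ^d be a finite rectangle, v : Λ → [0,1], ε ∈ (0, ε₀], γ ∈ (0, ε^{20}], ε₁ = ε/3, E ∈ ℝ, and λ ∈ ℝ with |λ − E| ≤ ε₁/2. Let R = { x ∈ Λ : |v_x + 2dγ − E| ≤ ε₁ }, assume ∅ ≠ R ≠ Λ, and let B, C = Bᵀ, D be the off-diagonal and lower-right blocks of H with respect to the partition Λ = R ∪ (Λ∖R). Then D − λ·I is invertible and for all x, y ∈ R: | ( B (D − λ)^{−1} C )_{x y} | ≤ (1/2) · γ^{0.9 · max(|x−y|, 2)}. -/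
noncomputable section

open scoped BigOperators

/-- The off-diagonal block of the Hamiltonian between two index sets. -/
def hamBlock (d : ℕ) (γ : ℝ) (v : (Fin d → ℤ) → ℝ)
    (X Y : Finset (Fin d → ℤ)) : Matrix X Y ℝ :=
  Matrix.of fun x y => hamEntry d γ v x y

/-!
On the nonresonant sites the diagonal of `D - λ` is at least `ε / 6` in modulus, while the hopping
terms have size `γ ≪ ε`. So `D - λ` stays row diagonally dominant after conjugation by the
exponential weight `z ↦ s ^ |z - w|` with `s = γ ^ 0.9`: moving to one of the `2d` neighbours costs
at most a factor `s⁻¹`, and `2dγ / s = 2d γ ^ 0.1 ≤ ε / 12`. The maximum principle for dominant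
matrices then gives invertibility and the decay `|(D - λ)⁻¹ z w| ≤ (12 / ε) s ^ |z - w|`. In
`B (D - λ)⁻¹ C` each outer factor shortens the distance by one hop, but its row sum
`2dγ ≤ (ε / 12) s` restores the lost power of `s`.
-/

section DiagonalDominance

open Finset Matrix

/-- Row diagonal dominance of `M` after conjugation by the diagonal matrix with entries `w`, with
margin `δ` relative to the weight; for an exponential weight it gives an exponentially decaying
inverse. The weight is not divided out, so the definition makes sense without positivity of `w`. -/
def IsWeightedDiagDominant {n 𝕜 : Type*} [Fintype n] [DecidableEq n] [Norm 𝕜]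
    (M : Matrix n n 𝕜) (w : n → ℝ) (δ : ℝ) : Prop :=
  ∀ i, ∑ j ∈ univ.erase i, ‖M i j‖ * w j + δ * w i ≤ ‖M i i‖ * w i

namespace IsWeightedDiagDominant

variable {n 𝕜 : Type*} [Fintype n] [DecidableEq n] [NormedField 𝕜] {M : Matrix n n 𝕜}
  {w : n → ℝ} {δ : ℝ}

-- Maximum principle: evaluate the equation in the row where `‖u i‖ / w i` is largest.
theorem norm_le (h : IsWeightedDiagDominant M w δ) (hw : ∀ i, 0 < w i) (hδ : 0 < δ)
    {u : n → 𝕜} {a : ℝ} (hu : ∀ i, ‖(M *ᵥ u) i‖ ≤ a * w i) (i : n) :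
    ‖u i‖ ≤ a / δ * w i := by
  have : Nonempty n := ⟨i⟩
  obtain ⟨k, hk⟩ := Finite.exists_max fun j => ‖u j‖ / w j
  set m := ‖u k‖ / w k
  have hm0 : 0 ≤ m := div_nonneg (norm_nonneg _) (hw k).le
  have hle : ∀ j, ‖u j‖ ≤ m * w j := fun j => (div_le_iff₀ (hw j)).1 (hk j)
  have huk : ‖u k‖ = m * w k := (div_mul_cancel₀ _ (hw k).ne').symm
  have hrow : M k k * u k = (M *ᵥ u) k - ∑ j ∈ univ.erase k, M k j * u j :=
    eq_sub_of_add_eq (add_sum_erase univ (fun j => M k j * u j) (mem_univ k))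
  have hoff : ‖∑ j ∈ univ.erase k, M k j * u j‖ ≤ m * ∑ j ∈ univ.erase k, ‖M k j‖ * w j := by
    rw [mul_sum]
    refine norm_sum_le_of_le _ fun j _ => ?_
    rw [norm_mul, mul_left_comm]
    exact mul_le_mul_of_nonneg_left (hle j) (norm_nonneg _)
  have hdiag : ‖M k k‖ * (m * w k) ≤ a * w k + m * ∑ j ∈ univ.erase k, ‖M k j‖ * w j := by
    rw [← huk, ← norm_mul, hrow]
    exact (norm_sub_le _ _).trans (add_le_add (hu k) hoff)
  have hmδ : m * δ ≤ a := by
    refine le_of_mul_le_mul_right ?_ (hw k)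
    linarith [mul_le_mul_of_nonneg_left (h k) hm0]
  exact (hle i).trans (mul_le_mul_of_nonneg_right ((le_div_iff₀ hδ).2 hmδ) (hw i).le)

theorem isUnit (h : IsWeightedDiagDominant M w δ) (hw : ∀ i, 0 < w i) (hδ : 0 < δ) :
    IsUnit M := by
  rw [← mulVec_injective_iff_isUnit]
  refine (injective_iff_map_eq_zero M.mulVecLin).2 fun u hu => funext fun i => ?_
  rw [mulVecLin_apply] at hu
  simpa using h.norm_le hw hδ (u := u) (a := 0) (by simp [hu]) i

theorem norm_inv_apply_le (h : IsWeightedDiagDominant M w δ) (hw : ∀ i, 0 < w i) (hδ : 0 < δ)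
    (i j : n) : ‖M⁻¹ i j‖ ≤ (w j)⁻¹ / δ * w i := by
  refine h.norm_le hw hδ (u := M⁻¹.col j) (fun k => ?_) i
  have hdet : IsUnit M.det := M.isUnit_iff_isUnit_det.1 (h.isUnit hw hδ)
  have hcol : (M *ᵥ M⁻¹.col j) k = (1 : Matrix n n 𝕜) k j :=
    congrFun₂ (mul_nonsing_inv M hdet) k j
  rw [hcol]
  obtain rfl | hkj := eq_or_ne k j
  · simp [(hw k).ne']
  · rw [one_apply_ne hkj, norm_zero]
    exact mul_nonneg (inv_nonneg.2 (hw j).le) (hw k).le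

end IsWeightedDiagDominant

theorem norm_mul_mul_apply_le {l m n o 𝕜 : Type*} [Fintype m] [Fintype n]
    [NonUnitalSeminormedRing 𝕜] {B : Matrix l m 𝕜} {G : Matrix m n 𝕜} {C : Matrix n o 𝕜} {x : l}
    {y : o} {b g c : ℝ}
    (hB : ∑ i, ‖B x i‖ ≤ b) (hC : ∑ j, ‖C j y‖ ≤ c) (hg : 0 ≤ g)
    (hG : ∀ i j, B x i ≠ 0 → C j y ≠ 0 → ‖G i j‖ ≤ g) :
    ‖(B * G * C) x y‖ ≤ b * g * c := by
  have hterm : ∀ i j, ‖B x i * G i j * C j y‖ ≤ ‖B x i‖ * g * ‖C j y‖ := by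
    intro i j
    by_cases hBi : B x i = 0
    · simp [hBi]
    by_cases hCj : C j y = 0
    · simp [hCj]
    exact norm_mul₃_le.trans (by gcongr; exact hG i j hBi hCj)
  calc ‖(B * G * C) x y‖ = ‖∑ j, ∑ i, B x i * G i j * C j y‖ := by
        simp only [mul_apply, sum_mul]
    _ ≤ ∑ j, ∑ i, ‖B x i‖ * g * ‖C j y‖ :=
        norm_sum_le_of_le _ fun j _ => norm_sum_le_of_le _ fun i _ => hterm i j
    _ = (∑ i, ‖B x i‖) * g * ∑ j, ‖C j y‖ := by
        simp only [sum_mul, mul_sum]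
    _ ≤ b * g * c := by
        have hb : 0 ≤ b := (sum_nonneg fun i _ => norm_nonneg (B x i)).trans hB
        gcongr

end DiagonalDominance

section Lattice

open Finset

variable {d : ℕ}

@[simp] theorem dist1_self (x : Fin d → ℤ) : dist1 x x = 0 := by
  simp [dist1]

theorem dist1_triangle (x y z : Fin d → ℤ) : dist1 x z ≤ dist1 x y + dist1 y z := by
  simp only [dist1, ← sum_add_distrib]
  exact sum_le_sum fun i _ => by lia

theorem exists_eq_add_or_sub_single_of_dist1_eq_one {x y : Fin d → ℤ} (h : dist1 x y = 1) :
    ∃ i, y = x + Pi.single i 1 ∨ y = x - Pi.single i 1 := by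
  obtain ⟨i, -, hi⟩ : ∃ i ∈ univ, (x i - y i).natAbs ≠ 0 :=
    exists_ne_zero_of_sum_ne_zero (h.trans_ne one_ne_zero)
  rw [dist1, ← add_sum_erase _ _ (mem_univ i)] at h
  have hrest : ∀ j ≠ i, y j = x j := fun j hj => by
    have := sum_eq_zero_iff.1 (show ∑ j ∈ univ.erase i, (x j - y j).natAbs = 0 by lia) j
      (mem_erase.2 ⟨hj, mem_univ j⟩)
    lia
  have hstep : y i = x i + 1 ∨ y i = x i - 1 := by lia
  refine ⟨i, hstep.imp (fun hi => ?_) fun hi => ?_⟩ <;>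
  · funext j
    obtain rfl | hj := eq_or_ne j i
    · simpa using hi
    · simpa [hj] using hrest j hj

theorem card_filter_dist1_eq_one_le (X : Finset (Fin d → ℤ)) (x : Fin d → ℤ) :
    #{z ∈ X | dist1 x z = 1} ≤ 2 * d := by
  classical
  have hsub : {z ∈ X | dist1 x z = 1} ⊆
      univ.image (fun i => x + Pi.single i 1) ∪ univ.image fun i => x - Pi.single i 1 := by
    intro z hz
    obtain ⟨i, rfl | rfl⟩ := exists_eq_add_or_sub_single_of_dist1_eq_one (mem_filter.1 hz).2 <;>
      simp
  calc #{z ∈ X | dist1 x z = 1} ≤ _ := card_le_card hsub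
    _ ≤ _ := card_union_le _ _
    _ ≤ d + d := by
        gcongr <;> exact card_image_le.trans_eq (card_fin d)
    _ = 2 * d := (two_mul d).symm

end Lattice

section AndersonHamiltonian

open Finset

variable {d : ℕ} {γ δ s lam : ℝ} {v : (Fin d → ℤ) → ℝ}

theorem hamEntry_comm (x y : Fin d → ℤ) : hamEntry d γ v x y = hamEntry d γ v y x := by
  obtain rfl | h := eq_or_ne x y
  · rfl
  · simp only [hamEntry, if_neg h, if_neg h.symm, dist1_comm x y]

theorem dist1_eq_one_of_hamEntry_ne_zero {x y : Fin d → ℤ} (hxy : x ≠ y)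
    (h : hamEntry d γ v x y ≠ 0) : dist1 x y = 1 := by
  contrapose! h
  simp [hamEntry, hxy, h]

theorem sum_abs_hamEntry_mul_le (hγ : 0 ≤ γ) {X : Finset (Fin d → ℤ)} {x : Fin d → ℤ}
    (hx : x ∉ X) {f : (Fin d → ℤ) → ℝ} {b : ℝ} (hb : 0 ≤ b)
    (hf : ∀ z ∈ X, dist1 x z = 1 → f z ≤ b) :
    ∑ z ∈ X, |hamEntry d γ v x z| * f z ≤ 2 * d * γ * b := by
  have hentry : ∀ z ∈ X, |hamEntry d γ v x z| * f z = if dist1 x z = 1 then γ * f z else 0 := by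
    intro z hz
    have hxz : x ≠ z := fun h => hx (h ▸ hz)
    split_ifs with h <;> simp [hamEntry, hxz, h, abs_of_nonneg hγ]
  calc ∑ z ∈ X, |hamEntry d γ v x z| * f z
      = ∑ z ∈ X with dist1 x z = 1, γ * f z := by rw [sum_congr rfl hentry, sum_filter]
    _ ≤ #{z ∈ X | dist1 x z = 1} • (γ * b) :=
        sum_le_card_nsmul _ _ _ fun z hz =>
          mul_le_mul_of_nonneg_left (hf z (mem_filter.1 hz).1 (mem_filter.1 hz).2) hγ
    _ ≤ (2 * d : ℕ) • (γ * b) :=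
        nsmul_le_nsmul_left (mul_nonneg hγ hb) (card_filter_dist1_eq_one_le X x)
    _ = 2 * d * γ * b := by rw [nsmul_eq_mul]; push_cast; ring

theorem sum_norm_hamBlock_row_le (hγ : 0 ≤ γ) {X Y : Finset (Fin d → ℤ)} (hXY : Disjoint X Y)
    (x : X) : ∑ z, ‖hamBlock d γ v X Y x z‖ ≤ 2 * d * γ := by
  have h := sum_abs_hamEntry_mul_le (v := v) hγ (disjoint_left.1 hXY x.2) (f := 1) zero_le_one
    fun _ _ _ => le_rfl
  rw [← sum_coe_sort] at h
  simpa only [Pi.one_apply, mul_one, hamBlock, Matrix.of_apply, Real.norm_eq_abs] using h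

theorem sum_norm_hamBlock_col_le (hγ : 0 ≤ γ) {X Y : Finset (Fin d → ℤ)} (hXY : Disjoint X Y)
    (y : Y) : ∑ z, ‖hamBlock d γ v X Y z y‖ ≤ 2 * d * γ := by
  simpa only [hamBlock, Matrix.of_apply, hamEntry_comm] using
    sum_norm_hamBlock_row_le (v := v) hγ hXY.symm y

theorem isWeightedDiagDominant_hamOn_sub_smul_one (hγ : 0 ≤ γ) (hs : 0 < s) (hs1 : s ≤ 1)
    {X : Finset (Fin d → ℤ)} (hX : ∀ z ∈ X, 2 * d * γ / s + δ ≤ |v z + 2 * d * γ - lam|)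
    (y : Fin d → ℤ) :
    IsWeightedDiagDominant (hamOn d γ v X - lam • (1 : Matrix X X ℝ))
      (fun z => s ^ dist1 (z : Fin d → ℤ) y) δ := by
  intro x
  have hdiag : (hamOn d γ v X - lam • (1 : Matrix X X ℝ)) x x = v x + 2 * d * γ - lam := by
    simp [hamOn, hamEntry, add_comm]
  have hoff : ∀ z ∈ univ.erase x, (hamOn d γ v X - lam • (1 : Matrix X X ℝ)) x z =
      hamEntry d γ v x z := by
    intro z hz
    simp [hamOn, Matrix.one_apply_ne (ne_of_mem_erase hz).symm]
  have hweight : ∀ z : Fin d → ℤ, dist1 x z = 1 →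
      s ^ dist1 z y ≤ s ^ dist1 (x : Fin d → ℤ) y / s := by
    intro z hz
    rw [le_div_iff₀ hs, ← pow_succ]
    refine pow_le_pow_of_le_one hs.le hs1 ?_
    have := dist1_triangle (x : Fin d → ℤ) z y
    lia
  have hsum : ∑ z ∈ univ.erase x, |hamEntry d γ v x z| * s ^ dist1 (z : Fin d → ℤ) y ≤
      2 * d * γ * (s ^ dist1 (x : Fin d → ℤ) y / s) := by
    have h := sum_abs_hamEntry_mul_le (v := v) hγ (x := x)
      (X := (univ.erase x).map (Function.Embedding.subtype _)) (by simp)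
      (f := fun z => s ^ dist1 z y) (by positivity) fun z _ => hweight z
    simpa only [sum_map, Function.Embedding.subtype_apply] using h
  rw [sum_congr rfl fun z hz => by rw [hoff z hz], hdiag]
  calc _ ≤ 2 * d * γ * (s ^ dist1 (x : Fin d → ℤ) y / s) + δ * s ^ dist1 (x : Fin d → ℤ) y := by
        gcongr
        exact hsum
    _ = (2 * d * γ / s + δ) * s ^ dist1 (x : Fin d → ℤ) y := by ring
    _ ≤ _ := mul_le_mul_of_nonneg_right (hX x x.2) (by positivity)

theorem isUnit_hamOn_sub_smul_one (hγ : 0 ≤ γ) (hs : 0 < s) (hs1 : s ≤ 1) (hδ : 0 < δ)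
    {X : Finset (Fin d → ℤ)} (hX : ∀ z ∈ X, 2 * d * γ / s + δ ≤ |v z + 2 * d * γ - lam|) :
    IsUnit (hamOn d γ v X - lam • (1 : Matrix X X ℝ)) :=
  (isWeightedDiagDominant_hamOn_sub_smul_one hγ hs hs1 hX 0).isUnit (fun _ => by positivity) hδ

theorem abs_inv_hamOn_sub_smul_one_apply_le (hγ : 0 ≤ γ) (hs : 0 < s) (hs1 : s ≤ 1) (hδ : 0 < δ)
    {X : Finset (Fin d → ℤ)} (hX : ∀ z ∈ X, 2 * d * γ / s + δ ≤ |v z + 2 * d * γ - lam|)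
    (z w : X) :
    |(hamOn d γ v X - lam • (1 : Matrix X X ℝ))⁻¹ z w| ≤
      s ^ dist1 (z : Fin d → ℤ) w / δ := by
  have h := (isWeightedDiagDominant_hamOn_sub_smul_one hγ hs hs1 hX w).norm_inv_apply_le
    (fun _ => by positivity) hδ z w
  simpa [div_eq_inv_mul] using h

theorem abs_hamBlock_mul_inv_mul_hamBlock_apply_le (hγ : 0 ≤ γ) (hs : 0 < s) (hs1 : s ≤ 1)
    (hδ : 0 < δ) (hγs : 2 * d * γ ≤ δ * s) {R X : Finset (Fin d → ℤ)} (hRX : Disjoint R X)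
    (hX : ∀ z ∈ X, 2 * δ ≤ |v z + 2 * d * γ - lam|) (x y : R) :
    |(hamBlock d γ v R X * (hamOn d γ v X - lam • (1 : Matrix X X ℝ))⁻¹ *
        hamBlock d γ v X R) x y| ≤ δ * s ^ max (dist1 (x : Fin d → ℤ) y) 2 := by
  set n := max (dist1 (x : Fin d → ℤ) y) 2
  have hX' : ∀ z ∈ X, 2 * d * γ / s + δ ≤ |v z + 2 * d * γ - lam| := fun z hz => by
    linarith [hX z hz, (div_le_iff₀ hs).2 hγs]
  have hne : ∀ (a : R) (z : X), (a : Fin d → ℤ) ≠ z := fun a z =>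
    disjoint_iff_ne.1 hRX a a.2 z z.2
  have hG : ∀ z w, hamBlock d γ v R X x z ≠ 0 → hamBlock d γ v X R w y ≠ 0 →
      ‖(hamOn d γ v X - lam • (1 : Matrix X X ℝ))⁻¹ z w‖ ≤ s ^ (n - 2) / δ := by
    intro z w hxz hwy
    have hxz1 := dist1_eq_one_of_hamEntry_ne_zero (hne x z) hxz
    have hwy1 := dist1_eq_one_of_hamEntry_ne_zero (hne y w).symm hwy
    have hdist : n - 2 ≤ dist1 (z : Fin d → ℤ) w := by
      have := dist1_triangle (x : Fin d → ℤ) z y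
      have := dist1_triangle (z : Fin d → ℤ) w y
      lia
    exact (abs_inv_hamOn_sub_smul_one_apply_le hγ hs hs1 hδ hX' z w).trans
      (div_le_div_of_nonneg_right (pow_le_pow_of_le_one hs.le hs1 hdist) hδ.le)
  calc _ ≤ 2 * d * γ * (s ^ (n - 2) / δ) * (2 * d * γ) :=
        norm_mul_mul_apply_le (sum_norm_hamBlock_row_le hγ hRX x)
          (sum_norm_hamBlock_col_le hγ hRX.symm y) (by positivity) hG
    _ ≤ δ * s * (s ^ (n - 2) / δ) * (δ * s) := by gcongr
    _ = δ * s ^ (n - 2 + 2) := by rw [pow_add]; field_simp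
    _ = δ * s ^ n := by rw [Nat.sub_add_cancel (le_max_right _ _)]

end AndersonHamiltonian

section Parameters

theorem exists_forall_mul_rpow_le_one {c η : ℝ} (hc : 1 < c) (hη : 0 < η) :
    ∃ ε₀ : ℝ, 0 < ε₀ ∧ ε₀ < 1 ∧ ∀ ε, 0 < ε → ε ≤ ε₀ → c * ε ^ η ≤ 1 := by
  have hc0 : 0 < c := one_pos.trans hc
  refine ⟨c ^ (-η⁻¹), by positivity,
    Real.rpow_lt_one_of_one_lt_of_neg hc (neg_neg_of_pos (inv_pos.2 hη)), fun ε hε hle => ?_⟩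
  calc c * ε ^ η ≤ c * (c ^ (-η⁻¹)) ^ η := by gcongr
    _ = 1 := by
        rw [← Real.rpow_mul hc0.le, neg_mul, inv_mul_cancel₀ hη.ne', Real.rpow_neg_one,
          mul_inv_cancel₀ hc0.ne']

theorem mul_le_mul_rpow_of_le_rpow {α p c ε γ : ℝ} (hα : α ≤ 1) (hc : 0 ≤ c) (hε : 0 < ε)
    (hcε : c * ε ^ (p * (1 - α) - 1) ≤ 1) (hγ : 0 < γ) (hγε : γ ≤ ε ^ p) :
    c * γ ≤ ε * γ ^ α := by
  calc c * γ = c * γ ^ (1 - α) * γ ^ α := by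
        rw [mul_assoc, ← Real.rpow_add hγ, sub_add_cancel, Real.rpow_one]
    _ ≤ c * (ε ^ p) ^ (1 - α) * γ ^ α := by
        have : 0 ≤ 1 - α := sub_nonneg.2 hα
        gcongr
    _ = c * ε ^ (p * (1 - α) - 1) * ε * γ ^ α := by
        rw [← Real.rpow_mul hε.le, Real.rpow_sub_one hε.ne']
        field_simp
    _ ≤ 1 * ε * γ ^ α := by gcongr
    _ = ε * γ ^ α := by rw [one_mul]

end Parameters

/-- The condition `1 < p * (1 - α)` makes `γ ^ (1 - α) ≤ ε ^ (p * (1 - α))` negligible compared with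
the gap `ε`. -/
theorem first_step_graphical_bound_general (d : ℕ) {α p : ℝ} (hα0 : 0 ≤ α) (hα1 : α < 1)
    (hαp : 1 < p * (1 - α)) :
    ∃ ε₀ : ℝ, 0 < ε₀ ∧ ε₀ < 1 ∧
    ∀ (Λ : Finset (Fin d → ℤ)) (v : (Fin d → ℤ) → ℝ) (ε γ : ℝ),
      0 < ε → ε ≤ ε₀ → 0 < γ → γ ≤ ε ^ p →
    ∀ E lam : ℝ, |lam - E| ≤ (ε / 3) / 2 →
    ∀ R : Finset (Fin d → ℤ), (∀ x ∈ Λ \ R, ε / 3 < |v x + 2 * d * γ - E|) →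
    IsUnit (hamOn d γ v (Λ \ R) - lam • (1 : Matrix ↥(Λ \ R) ↥(Λ \ R) ℝ)) ∧
    ∀ x y : ↥R,
      |(hamBlock d γ v R (Λ \ R) *
          (hamOn d γ v (Λ \ R) - lam • (1 : Matrix ↥(Λ \ R) ↥(Λ \ R) ℝ))⁻¹ *
          hamBlock d γ v (Λ \ R) R) x y|
        ≤ (1 / 2) * γ ^ (α * ((max (dist1 (x : Fin d → ℤ) (y : Fin d → ℤ)) 2 : ℕ) : ℝ)) := by
  obtain ⟨ε₀, hε₀, hε₀1, hsmall⟩ := exists_forall_mul_rpow_le_one (c := 24 * (d + 1))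
    (by linarith [d.cast_nonneg (α := ℝ)]) (sub_pos.2 hαp)
  refine ⟨ε₀, hε₀, hε₀1, fun Λ v ε γ hε hεε₀ hγ hγε E lam hlam R hR => ?_⟩
  have hs : 0 < γ ^ α := by positivity
  have hp : 0 < p := pos_of_mul_pos_left (one_pos.trans hαp) (sub_pos.2 hα1).le
  have hε1 : ε ≤ 1 := hεε₀.trans hε₀1.le
  have hs1 : γ ^ α ≤ 1 :=
    Real.rpow_le_one hγ.le (hγε.trans (Real.rpow_le_one hε.le hε1 hp.le)) hα0
  have hhop : 2 * d * γ ≤ ε / 12 * γ ^ α := by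
    linarith [mul_le_mul_rpow_of_le_rpow hα1.le (by positivity) hε (hsmall ε hε hεε₀) hγ hγε]
  have hgap : ∀ z ∈ Λ \ R, 2 * (ε / 12) ≤ |v z + 2 * d * γ - lam| := fun z hz => by
    linarith [hR z hz, abs_sub_le (v z + 2 * d * γ) lam E]
  refine ⟨isUnit_hamOn_sub_smul_one hγ.le hs hs1 (by positivity) (δ := ε / 12) fun z hz => ?_,
    fun x y => ?_⟩
  · linarith [hgap z hz, (div_le_iff₀ hs).2 hhop]
  · rw [Real.rpow_mul hγ.le, Real.rpow_natCast]
    refine (abs_hamBlock_mul_inv_mul_hamBlock_apply_le hγ.le hs hs1 (by positivity) hhop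
      Finset.disjoint_sdiff hgap x y).trans ?_
    gcongr
    linarith

/-- **Theorem 2.2 for `k = 1`** (first-step random-walk bound, (2.33)):
for `ε` small (depending only on `d`), `γ ≤ ε^20`, `|λ - E| ≤ ε₁/2` with `ε₁ = ε/3`,
and `R` the first-step resonant set, the matrix `D - λ` is invertible and
`|(B (D-λ)⁻¹ C)_{xy}| ≤ (1/2) γ^{0.9 max(|x-y|,2)}` for all `x, y ∈ R`. -/
theorem first_step_graphical_bound (d : ℕ) (hd : 1 ≤ d) :
    ∃ ε₀ : ℝ, 0 < ε₀ ∧ ε₀ < 1 ∧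
    ∀ Λ : Finset (Fin d → ℤ), IsRect Λ →
    ∀ v : (Fin d → ℤ) → ℝ, (∀ x ∈ Λ, v x ∈ Set.Icc (0:ℝ) 1) →
    ∀ ε γ : ℝ, 0 < ε → ε ≤ ε₀ → 0 < γ → γ ≤ ε ^ (20 : ℕ) →
    ∀ E lam : ℝ, |lam - E| ≤ (ε/3)/2 →
    ∀ R : Finset (Fin d → ℤ),
      (∀ x, x ∈ R ↔ x ∈ Λ ∧ |v x + 2*d*γ - E| ≤ ε/3) →
      R.Nonempty → R ≠ Λ →
    IsUnit (hamOn d γ v (Λ \ R) - lam • (1 : Matrix ↥(Λ \ R) ↥(Λ \ R) ℝ)) ∧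
    ∀ x y : ↥R,
      |(hamBlock d γ v R (Λ \ R) *
          (hamOn d γ v (Λ \ R) - lam • (1 : Matrix ↥(Λ \ R) ↥(Λ \ R) ℝ))⁻¹ *
          hamBlock d γ v (Λ \ R) R) x y|
        ≤ (1/2) * γ ^ ((0.9 : ℝ) *
            ((max (dist1 (x : Fin d → ℤ) (y : Fin d → ℤ)) 2 : ℕ) : ℝ)) := by
  obtain ⟨ε₀, hε₀, hε₀1, h⟩ := first_step_graphical_bound_general d (α := 0.9) (p := 20)
    (by norm_num) (by norm_num) (by norm_num)
  exact ⟨ε₀, hε₀, hε₀1, fun Λ _ v _ ε γ hε hεε₀ hγ hγε E lam hlam R hR _ _ =>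
    h Λ v ε γ hε hεε₀ hγ (mod_cast hγε) E lam hlam R fun x hx => not_le.1 fun hres =>
      (Finset.mem_sdiff.1 hx).2 ((hR x).2 ⟨(Finset.mem_sdiff.1 hx).1, hres⟩)⟩
end
end
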